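/- Let N ≥ 3, α ∈ (0, N), and p ≥ (N+α)/(N−2). Then there is a constant C > 0 such that for every u ∈ D^{1,2}(G): ‖R_α ∗ |u|^p‖_{2N/(N−α)} ≤ C·‖u‖_{D^{1,2}}^p. -/

import Mathlib

open Filter Topology

noncomputable section

namespace Choquard

variable {G : Type*}

/-- The word metric on the Cayley graph of `(G, S)`: the least `k` such that
`y = x * s₁ * ⋯ * s_k` with each `sᵢ ∈ S`. -/
def wordDist [Group G] (S : Finset G) (x y : G) : ℕ :=
  sInf {k : ℕ | ∃ l : List G, (∀ s ∈ l, s ∈ S) ∧ l.length = k ∧ y = x * l.prod}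

/-- Convolution against a kernel: `(R ∗ f)(x) = ∑_{y ∈ G} R(x,y) f(y)`. -/
def conv (R : G → G → ℝ) (f : G → ℝ) (x : G) : ℝ := ∑' y, R x y * f y

/-- The `ℓ^q(G)` norm of `u`. -/
def lpNorm (q : ℝ) (u : G → ℝ) : ℝ := (∑' x, |u x| ^ q) ^ (1 / q)

/-- `u ∈ ℓ^q(G)`. -/
def Memlp (q : ℝ) (u : G → ℝ) : Prop := Summable fun x : G => |u x| ^ q

/-- `|∇u(x)|_p^p = ∑_{y ∼ x} |u(y) − u(x)|^p`, where `y ∼ x` iff `y = x * s`, `s ∈ S`. -/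
def gradP [Group G] (S : Finset G) (p : ℝ) (u : G → ℝ) (x : G) : ℝ :=
  ∑ s ∈ S, |u (x * s) - u x| ^ p

/-- The `D^{1,p}` norm `(∑_x ∑_{y ∼ x} |u(y) − u(x)|^p)^{1/p}`. -/
def D1Norm [Group G] (S : Finset G) (p : ℝ) (u : G → ℝ) : ℝ :=
  (∑' x, gradP S p u x) ^ (1 / p)

/-- `u ∈ D^{1,p}(G) = {u ∈ ℓ^{Np/(N−p)}(G) : ‖u‖_{D^{1,p}} < ∞}`. -/
def MemD1p [Group G] (S : Finset G) (N : ℕ) (p : ℝ) (u : G → ℝ) : Prop :=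
  Memlp ((N : ℝ) * p / ((N : ℝ) - p)) u ∧ Summable (gradP S p u)

/-- `|∇u(x)|₂² = ∑_{y ∼ x} (u(y) − u(x))²`. -/
def gradSq [Group G] (S : Finset G) (u : G → ℝ) (x : G) : ℝ :=
  ∑ s ∈ S, (u (x * s) - u x) ^ 2

/-- The `D^{1,2}` norm. -/
def D12Norm [Group G] (S : Finset G) (u : G → ℝ) : ℝ :=
  (∑' x, gradSq S u x) ^ ((1 : ℝ) / 2)

/-- `u ∈ D^{1,2}(G) = {u ∈ ℓ^{2N/(N−2)}(G) : ‖u‖_{D^{1,2}} < ∞}`. -/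
def MemD12 [Group G] (S : Finset G) (N : ℕ) (u : G → ℝ) : Prop :=
  Memlp (2 * (N : ℝ) / ((N : ℝ) - 2)) u ∧ Summable (gradSq S u)

/-- The graph Laplacian `Δu(x) = ∑_{y ∼ x} (u(y) − u(x))`. -/
def lap [Group G] (S : Finset G) (u : G → ℝ) (x : G) : ℝ :=
  ∑ s ∈ S, (u (x * s) - u x)

/-- `u ∈ D^{2,2}(G) = {u ∈ ℓ^{2N/(N−4)}(G) : ‖Δu‖_{ℓ²} < ∞}`. -/
def MemD22 [Group G] (S : Finset G) (N : ℕ) (u : G → ℝ) : Prop :=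
  Memlp (2 * (N : ℝ) / ((N : ℝ) - 4)) u ∧ Summable fun x => (lap S u x) ^ 2

/-- `u ∈ D^{2,p}(G) = {u ∈ ℓ^{Np/(N−2p)}(G) : ‖Δu‖_{ℓ^p} < ∞}`. -/
def MemD2p [Group G] (S : Finset G) (N : ℕ) (p : ℝ) (u : G → ℝ) : Prop :=
  Memlp ((N : ℝ) * p / ((N : ℝ) - 2 * p)) u ∧ Summable fun x => |lap S u x| ^ p

/-- The nonlocal energy `∑_{x ∈ G} (R_α ∗ |u|^p)(x) |u(x)|^p`. -/
def energy (R : G → G → ℝ) (p : ℝ) (u : G → ℝ) : ℝ :=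
  ∑' x, conv R (fun y => |u y| ^ p) x * |u x| ^ p

/-- The optimal constant `K` of the Sobolev-type inequality. -/
def bestK [Group G] (S : Finset G) (N : ℕ) (R : G → G → ℝ) (p : ℝ) : ℝ :=
  sSup {t : ℝ | ∃ u : G → ℝ, MemD12 S N u ∧ D12Norm S u = 1 ∧ t = energy R p u}

/-- The discrete `p`-Laplacian. -/
def pLap [Group G] (S : Finset G) (p : ℝ) (u : G → ℝ) (x : G) : ℝ :=
  ∑ s ∈ S, |u (x * s) - u x| ^ (p - 2) * (u (x * s) - u x)

/-- The cutoff `Ψ_r`, the indicator of `{x : d(x,e) ≥ r + 1}`. -/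
def cutoff [Group G] (S : Finset G) (r : ℕ) (x : G) : ℝ :=
  if r + 1 ≤ wordDist S 1 x then 1 else 0

/-!
The inequality is the composition of two estimates.

*Hardy–Littlewood–Sobolev.* Polynomial growth puts the rows and columns of the kernel into weak
`ℓ^w` with `w = N / (N - α)`, so it suffices to prove Young's inequality for such kernels. In the
dual form `∑ g(x) R(x, y) f(y)` with `‖f‖_p, ‖g‖_t ≤ 1`, split the pairs `(x, y)` according to which
of `f(y) ^ p` and `g(x) ^ t` is larger. In each part the smaller function is bounded pointwise by a
power of the larger one; truncating the kernel at a suitable height, with Hölder's inequality for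
its small values and summation over dyadic levels, then bounds the inner sum by the power of the
larger function that makes the outer sum at most a constant.

*Sobolev.* If `v` vanishes off `Ω` and a ball `B` has at least `2 |Ω|` elements, then for every `x`
at least half of the translates `x * h`, `h ∈ B`, leave `Ω`; averaging `|v(x * h) - v(x)|` over `B`
gives a Faber–Krahn inequality. Applied to the slices of `|u|` between consecutive powers of two,
whose energies sum to at most that of `u`, it yields Sobolev's inequality (Maz'ya's truncation).

On a discrete space `ℓ^q` norms decrease in `q`, which is why every `p` above the critical exponent
is allowed.
-/

open scoped ENNReal NNReal

section SequenceSpaces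

variable {X : Type*} {p q : ℝ} {f g : X → ℝ≥0∞}

/-- The `ℓ^p` norm of an `ℝ≥0∞`-valued function, taken in `ℝ≥0∞` so that, unlike `lpNorm`, it is
`∞` rather than `0` off `ℓ^p`. -/
def elpNorm (p : ℝ) (f : X → ℝ≥0∞) : ℝ≥0∞ := (∑' x, f x ^ p) ^ (1 / p)

lemma elpNorm_rpow (hp : p ≠ 0) (f : X → ℝ≥0∞) : elpNorm p f ^ p = ∑' x, f x ^ p := by
  rw [elpNorm, one_div, ENNReal.rpow_inv_rpow hp]

lemma elpNorm_mono (hp : 0 ≤ p) (h : ∀ x, f x ≤ g x) : elpNorm p f ≤ elpNorm p g :=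
  ENNReal.rpow_le_rpow (ENNReal.tsum_le_tsum fun x => ENNReal.rpow_le_rpow (h x) hp)
    (one_div_nonneg.2 hp)

lemma elpNorm_one (f : X → ℝ≥0∞) : elpNorm 1 f = ∑' x, f x := by
  simp only [elpNorm, ENNReal.rpow_one, one_div, inv_one]

lemma elpNorm_comp_equiv {Y : Type*} (e : Y ≃ X) (f : X → ℝ≥0∞) :
    elpNorm p (fun y => f (e y)) = elpNorm p f := by
  rw [elpNorm, elpNorm, e.tsum_eq fun x => f x ^ p]

lemma elpNorm_const_mul (hp : 0 < p) (c : ℝ≥0∞) (f : X → ℝ≥0∞) :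
    elpNorm p (fun x => c * f x) = c * elpNorm p f := by
  simp only [elpNorm, ENNReal.mul_rpow_of_nonneg _ _ hp.le, ENNReal.tsum_mul_left]
  rw [ENNReal.mul_rpow_of_nonneg _ _ (one_div_nonneg.2 hp.le), one_div,
    ENNReal.rpow_rpow_inv hp.ne']

lemma le_elpNorm (hp : 0 < p) (f : X → ℝ≥0∞) (x : X) : f x ≤ elpNorm p f := by
  rw [← ENNReal.rpow_le_rpow_iff hp, elpNorm_rpow hp.ne']
  exact ENNReal.le_tsum x

lemma elpNorm_anti (hp : 0 < p) (hpq : p ≤ q) (f : X → ℝ≥0∞) : elpNorm q f ≤ elpNorm p f := by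
  rw [← ENNReal.rpow_le_rpow_iff (hp.trans_le hpq), elpNorm_rpow (hp.trans_le hpq).ne']
  have split (a : ℝ≥0∞) : a ^ q = a ^ (q - p) * a ^ p := by
    rw [← ENNReal.rpow_add_of_nonneg _ _ (sub_nonneg.2 hpq) hp.le, sub_add_cancel]
  calc ∑' x, f x ^ q = ∑' x, f x ^ (q - p) * f x ^ p := tsum_congr fun x => split (f x)
    _ ≤ ∑' x, elpNorm p f ^ (q - p) * f x ^ p := by
        gcongr with x
        exact le_elpNorm hp f x
    _ = elpNorm p f ^ q := by rw [ENNReal.tsum_mul_left, ← elpNorm_rpow hp.ne', ← split]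

lemma tsum_mul_le_elpNorm_mul_elpNorm (hpq : p.HolderConjugate q) (f g : X → ℝ≥0∞) :
    ∑' x, f x * g x ≤ elpNorm p f * elpNorm q g := by
  let _ : MeasurableSpace X := ⊤
  simpa only [elpNorm, MeasureTheory.lintegral_count, Pi.mul_apply] using
    ENNReal.lintegral_mul_le_Lp_mul_Lq MeasureTheory.Measure.count hpq
      (Measurable.of_discrete (f := f)).aemeasurable (Measurable.of_discrete (f := g)).aemeasurable

lemma elpNorm_add_le (hp : 1 ≤ p) (f g : X → ℝ≥0∞) :
    elpNorm p (fun x => f x + g x) ≤ elpNorm p f + elpNorm p g := by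
  let _ : MeasurableSpace X := ⊤
  simpa only [elpNorm, MeasureTheory.lintegral_count, Pi.add_apply] using
    ENNReal.lintegral_Lp_add_le (μ := MeasureTheory.Measure.count)
      (Measurable.of_discrete (f := f)).aemeasurable
      (Measurable.of_discrete (f := g)).aemeasurable hp

lemma elpNorm_le_of_forall_tsum_mul_le (hpq : p.HolderConjugate q) {K : ℝ≥0}
    (h : ∀ g : X → ℝ≥0∞, ∑' x, g x ^ q ≤ 1 → ∑' x, g x * f x ≤ K) : elpNorm p f ≤ K := by
  classical
  have ne_top (x : X) : f x ≠ ∞ := by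
    have := h (Pi.single x 1) (by
      rw [tsum_eq_single x fun y hy => by simp [hy, hpq.symm.pos]]; simp)
    rw [tsum_eq_single x fun y hy => by simp [hy], Pi.single_eq_same, one_mul] at this
    exact ne_top_of_le_ne_top ENNReal.coe_ne_top this
  lift f to X → ℝ≥0 using ne_top
  beta_reduce at h ⊢
  have finite_bound (s : Finset X) : (∑ x ∈ s, f x ^ p) ^ (1 / p) ≤ K := by
    obtain ⟨g, hg, hfg⟩ := (NNReal.isGreatest_Lp s f hpq).1
    simp only [← hfg, mul_comm (f _)]
    have := h (fun x => if x ∈ s then g x else 0) (by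
      rw [tsum_eq_sum (s := s) fun x hx => by simp [hx, hpq.symm.pos], Finset.sum_congr rfl
        fun x hx => by rw [if_pos hx, ← ENNReal.coe_rpow_of_nonneg _ hpq.symm.nonneg]]
      exact_mod_cast hg)
    rw [tsum_eq_sum (s := s) fun x hx => by simp [hx],
      Finset.sum_congr rfl fun x hx => by rw [if_pos hx]] at this
    exact_mod_cast this
  rw [← ENNReal.rpow_le_rpow_iff hpq.pos, elpNorm_rpow hpq.ne_zero, ENNReal.tsum_eq_iSup_sum]
  refine iSup_le fun s => ?_
  have := NNReal.rpow_le_rpow (finite_bound s) hpq.nonneg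
  rw [one_div, NNReal.rpow_inv_rpow hpq.ne_zero] at this
  simp only [← ENNReal.coe_rpow_of_nonneg _ hpq.nonneg]
  exact_mod_cast this

end SequenceSpaces

section WeakYoung

variable {X Y : Type*} {A : ℝ≥0} {k : Y → ℝ≥0∞} {m p t w : ℝ} {a : ℝ≥0∞}

/-- `k` lies in weak `ℓ^w`, with `w`-th power of the quasi-norm at most `A`. -/
def IsWeakLp (w : ℝ) (A : ℝ≥0) (k : Y → ℝ≥0∞) : Prop :=
  ∀ a : ℝ≥0∞, a ^ w * {y | a < k y}.encard ≤ A

lemma tsum_ite_const (P : Y → Prop) [DecidablePred P] (c : ℝ≥0∞) :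
    ∑' y, (if P y then c else 0) = c * {y | P y}.encard := by
  rw [mul_comm, ← ENNReal.tsum_set_const, tsum_subtype {y | P y} fun _ => c]
  simp only [Set.indicator_apply, Set.mem_ofPred_eq]

namespace IsWeakLp

lemma ne_top (hk : IsWeakLp w A k) (hw : 0 < w) (y : Y) : k y ≠ ∞ := by
  intro hy
  have level (a : ℝ≥0) : a ^ w ≤ A := by
    have one_le : (1 : ℝ≥0∞) ≤ {y | (a : ℝ≥0∞) < k y}.encard := by
      exact_mod_cast Set.one_le_encard_iff_nonempty.2 ⟨y, by simp [hy]⟩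
    have := (le_mul_of_one_le_right' one_le).trans (hk a)
    rw [← ENNReal.coe_rpow_of_nonneg _ hw.le] at this
    exact_mod_cast this
  have := level ((A + 1) ^ w⁻¹)
  rw [NNReal.rpow_inv_rpow hw.ne'] at this
  exact absurd this (not_le.2 (lt_add_one A))

lemma tsum_layer_le (hk : IsWeakLp w A k) (hm : 0 ≤ m) (ha : a ≠ 0) (ha' : a ≠ ∞) :
    ∑' y, (if a < k y ∧ k y ≤ 2 * a then k y ^ m else 0) ≤ 2 ^ m * A * a ^ (m - w) := by
  classical
  calc ∑' y, (if a < k y ∧ k y ≤ 2 * a then k y ^ m else 0)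
      ≤ ∑' y, (if a < k y then (2 * a) ^ m else 0) := by
        refine ENNReal.tsum_le_tsum fun y => ?_
        split_ifs with h h'
        · exact ENNReal.rpow_le_rpow h.2 hm
        · exact absurd h.1 h'
        all_goals exact zero_le
    _ = 2 ^ m * a ^ (m - w) * (a ^ w * {y | a < k y}.encard) := by
        rw [tsum_ite_const, ENNReal.mul_rpow_of_nonneg _ _ hm, ← sub_add_cancel m w,
          ENNReal.rpow_add _ _ ha ha', add_sub_cancel_right]
        ring
    _ ≤ 2 ^ m * a ^ (m - w) * A := by gcongr; exact hk a
    _ = 2 ^ m * A * a ^ (m - w) := by ring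

lemma exists_mem_layer (hk : IsWeakLp w A k) (hw : 0 < w) (ha : a ≠ 0) (ha' : a ≠ ∞) {y : Y}
    (hy : k y ≠ 0) : ∃ n : ℤ, 2 ^ n * a < k y ∧ k y ≤ 2 * (2 ^ n * a) := by
  obtain ⟨n, hn, hn'⟩ := ENNReal.exists_mem_Ioc_zpow (ENNReal.div_ne_zero.2 ⟨hy, ha'⟩)
    (ENNReal.div_ne_top (hk.ne_top hw y) ha) ENNReal.one_lt_two ENNReal.ofNat_ne_top
  refine ⟨n, ENNReal.mul_lt_of_lt_div hn, ?_⟩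
  rw [ENNReal.zpow_add two_ne_zero ENNReal.ofNat_ne_top, zpow_one, ENNReal.div_le_iff ha ha'] at hn'
  rwa [← mul_assoc, mul_comm 2]

lemma tsum_le_of_layers (hk : IsWeakLp w A k) (hw : 0 < w) (hm : 0 < m) (ha : a ≠ 0)
    (ha' : a ≠ ∞) (P : Y → Prop) [DecidablePred P] (e : ℕ → ℤ)
    (he : ∀ y, P y → ∀ n : ℤ, 2 ^ n * a < k y → k y ≤ 2 * (2 ^ n * a) → n ∈ Set.range e)
    {δ : ℝ} (hδ : ∀ j, e j * (m - w) ≤ -δ * j) :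
    ∑' y, (if P y then k y ^ m else 0) ≤ 2 ^ m * A * (1 - 2 ^ (-δ))⁻¹ * a ^ (m - w) := by
  have zpow_ne_zero (n : ℤ) : (2 : ℝ≥0∞) ^ n ≠ 0 :=
    (ENNReal.zpow_pos two_ne_zero ENNReal.ofNat_ne_top n).ne'
  have zpow_ne_top (n : ℤ) : (2 : ℝ≥0∞) ^ n ≠ ∞ :=
    (ENNReal.zpow_lt_top two_ne_zero ENNReal.ofNat_ne_top n).ne
  have mem_layer (y : Y) : (if P y then k y ^ m else 0) ≤
      ∑' j, if 2 ^ e j * a < k y ∧ k y ≤ 2 * (2 ^ e j * a) then k y ^ m else 0 := by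
    split_ifs with hP
    · rcases eq_or_ne (k y) 0 with hy | hy
      · simp only [hy, ENNReal.zero_rpow_of_pos hm, zero_le]
      · obtain ⟨n, hn, hn'⟩ := hk.exists_mem_layer hw ha ha' hy
        obtain ⟨j, rfl⟩ := he y hP n hn hn'
        exact (if_pos ⟨hn, hn'⟩).ge.trans (ENNReal.le_tsum j)
    · exact zero_le
  have layer_le (j : ℕ) : 2 ^ m * A * (2 ^ e j * a) ^ (m - w) ≤
      2 ^ m * A * a ^ (m - w) * (2 ^ (-δ)) ^ j := by
    calc 2 ^ m * A * (2 ^ e j * a) ^ (m - w)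
        = 2 ^ m * A * a ^ (m - w) * 2 ^ (e j * (m - w)) := by
          rw [ENNReal.mul_rpow_of_ne_zero (zpow_ne_zero _) ha, ← ENNReal.rpow_intCast,
            ← ENNReal.rpow_mul]
          ring
      _ ≤ 2 ^ m * A * a ^ (m - w) * 2 ^ (-δ * j) := by
          gcongr _ * ?_
          exact ENNReal.rpow_le_rpow_of_exponent_le one_le_two (hδ j)
      _ = 2 ^ m * A * a ^ (m - w) * (2 ^ (-δ)) ^ j := by rw [ENNReal.rpow_mul_natCast]
  calc ∑' y, (if P y then k y ^ m else 0)
      ≤ ∑' y, ∑' j, if 2 ^ e j * a < k y ∧ k y ≤ 2 * (2 ^ e j * a) then k y ^ m else 0 :=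
        ENNReal.tsum_le_tsum mem_layer
    _ = ∑' j, ∑' y, if 2 ^ e j * a < k y ∧ k y ≤ 2 * (2 ^ e j * a) then k y ^ m else 0 :=
        ENNReal.tsum_comm
    _ ≤ ∑' j, 2 ^ m * A * a ^ (m - w) * (2 ^ (-δ)) ^ j :=
        ENNReal.tsum_le_tsum fun j => (hk.tsum_layer_le hm.le (mul_ne_zero (zpow_ne_zero _) ha)
          (ENNReal.mul_ne_top (zpow_ne_top _) ha')).trans (layer_le j)
    _ = 2 ^ m * A * (1 - 2 ^ (-δ))⁻¹ * a ^ (m - w) := by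
        rw [ENNReal.tsum_mul_left, ENNReal.tsum_geometric, mul_right_comm]

lemma tsum_large_le (hk : IsWeakLp w A k) (hm : 0 < m) (hmw : m < w) (ha : a ≠ 0) (ha' : a ≠ ∞)
    [DecidablePred fun y => a < k y] :
    ∑' y, (if a < k y then k y ^ m else 0) ≤
      2 ^ m * A * (1 - 2 ^ (-(w - m)))⁻¹ * a ^ (m - w) := by
  refine hk.tsum_le_of_layers (hm.trans hmw) hm ha ha' _ (fun j => j) ?_ fun j => ?_
  · intro y hy n _ hn
    refine ⟨n.toNat, Int.toNat_of_nonneg ?_⟩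
    by_contra! hneg
    refine hy.not_ge (hn.trans ?_)
    calc 2 * (2 ^ n * a) ≤ 2 * (2 ^ (-1 : ℤ) * a) := by
          gcongr
          exacts [one_le_two, Int.le_sub_one_of_lt hneg]
      _ = a := by
          rw [zpow_neg_one, ← mul_assoc, ENNReal.mul_inv_cancel two_ne_zero ENNReal.ofNat_ne_top,
            one_mul]
  · push_cast
    linarith

lemma tsum_small_le (hk : IsWeakLp w A k) (hw : 0 < w) (hwm : w < m) (ha : a ≠ 0) (ha' : a ≠ ∞)
    [DecidablePred fun y => k y ≤ a] :
    ∑' y, (if k y ≤ a then k y ^ m else 0) ≤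
      2 ^ m * A * (1 - 2 ^ (-(m - w)))⁻¹ * a ^ (m - w) := by
  refine hk.tsum_le_of_layers hw (hw.trans hwm) ha ha' _ (fun j => -(j + 1)) ?_ fun j => ?_
  · intro y hy n hn _
    have hneg : n < 0 := by
      by_contra! hn0
      refine hn.not_ge (hy.trans (le_mul_of_one_le_left' ?_))
      simpa using ENNReal.zpow_le_of_le one_le_two hn0
    exact ⟨(-n).toNat - 1, by dsimp only; omega⟩
  · push_cast
    nlinarith

end IsWeakLp

lemma layer_const_ne_top (m : ℝ) {δ : ℝ} (hδ : 0 < δ) :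
    (2 ^ m * A * (1 - 2 ^ (-δ))⁻¹ : ℝ≥0∞) ≠ ∞ := by
  have : (2 : ℝ≥0∞) ^ (-δ) < 1 := ENNReal.rpow_lt_one_of_one_lt_of_neg
    ENNReal.one_lt_two (neg_lt_zero.2 hδ)
  exact ENNReal.mul_ne_top (ENNReal.mul_ne_top
    (ENNReal.rpow_ne_top_of_ne_zero two_ne_zero ENNReal.ofNat_ne_top) ENNReal.coe_ne_top)
    (ENNReal.inv_ne_top.2 (tsub_pos_of_lt this).ne')

lemma exists_tsum_mul_le_near_add_far (A : ℝ≥0) {q : ℝ} (hpq : p.HolderConjugate q)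
    (hw : 1 < w) (hwq : w < q) :
    ∃ K : ℝ≥0, ∀ k f : Y → ℝ≥0∞, IsWeakLp w A k → ∀ a b : ℝ≥0∞, a ≠ 0 → a ≠ ∞ →
      (∀ y, f y ≤ b) → ∑' y, k y * f y ≤ K * (b * a ^ (1 - w) + a ^ (1 - w / q) * elpNorm p f) := by
  classical
  set K₁ : ℝ≥0∞ := 2 ^ (1 : ℝ) * A * (1 - 2 ^ (-(w - 1)))⁻¹
  set K₂ : ℝ≥0∞ := (2 ^ q * A * (1 - 2 ^ (-(q - w)))⁻¹) ^ q⁻¹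
  have K_ne_top : K₁ + K₂ ≠ ∞ := ENNReal.add_ne_top.2
    ⟨layer_const_ne_top 1 (sub_pos.2 hw), ENNReal.rpow_ne_top_of_nonneg
      (inv_nonneg.2 hpq.symm.nonneg) (layer_const_ne_top q (sub_pos.2 hwq))⟩
  refine ⟨(K₁ + K₂).toNNReal, fun k f hk a b ha ha' hf => ?_⟩
  rw [ENNReal.coe_toNNReal K_ne_top]
  have near : ∑' y, (if a < k y then k y else 0) ≤ K₁ * a ^ (1 - w) := by
    have := hk.tsum_large_le one_pos hw ha ha'
    simp only [ENNReal.rpow_one (k _)] at this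
    exact this
  have far : elpNorm q (fun y => if k y ≤ a then k y else 0) ≤ K₂ * a ^ (1 - w / q) := by
    rw [← ENNReal.rpow_le_rpow_iff hpq.symm.pos, elpNorm_rpow hpq.symm.ne_zero,
      ENNReal.mul_rpow_of_nonneg _ _ hpq.symm.nonneg, ENNReal.rpow_inv_rpow hpq.symm.ne_zero,
      ← ENNReal.rpow_mul, sub_mul, one_mul, div_mul_cancel₀ _ hpq.symm.ne_zero]
    simpa only [ENNReal.zero_rpow_of_pos hpq.symm.pos, apply_ite (· ^ q)] using
      hk.tsum_small_le (one_pos.trans hw) hwq ha ha'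
  calc ∑' y, k y * f y
      ≤ ∑' y, (b * (if a < k y then k y else 0) + (if k y ≤ a then k y else 0) * f y) := by
        refine ENNReal.tsum_le_tsum fun y => ?_
        rcases lt_or_ge a (k y) with h | h
        · rw [if_pos h, if_neg h.not_ge, zero_mul, add_zero, mul_comm]
          gcongr
          exact hf y
        · rw [if_pos h, if_neg h.not_gt, mul_zero, zero_add]
    _ ≤ b * (K₁ * a ^ (1 - w)) + K₂ * a ^ (1 - w / q) * elpNorm p f := by
        rw [ENNReal.tsum_add, ENNReal.tsum_mul_left]
        gcongr
        exact (tsum_mul_le_elpNorm_mul_elpNorm hpq.symm _ _).trans (by gcongr)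
    _ ≤ (K₁ + K₂) * (b * a ^ (1 - w)) + (K₁ + K₂) * (a ^ (1 - w / q) * elpNorm p f) := by
        rw [mul_left_comm, mul_assoc K₂]
        gcongr
        exacts [le_self_add, le_add_self]
    _ = (K₁ + K₂) * (b * a ^ (1 - w) + a ^ (1 - w / q) * elpNorm p f) := (mul_add _ _ _).symm

lemma exists_tsum_mul_le_of_le (A : ℝ≥0) (hp : 1 < p) (hw : 1 < w) (hpw : 1 < p⁻¹ + w⁻¹) :
    ∃ K : ℝ≥0, ∀ k f : Y → ℝ≥0∞, IsWeakLp w A k → ∑' y, f y ^ p ≤ 1 → ∀ b : ℝ≥0∞, b ≠ ∞ →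
      (∀ y, f y ≤ b) → ∑' y, k y * f y ≤ K * b ^ (1 + p / w - p) := by
  have hpq : p.HolderConjugate p.conjExponent := .conjExponent hp
  have hw0 : 0 < w := one_pos.trans hw
  have hwq : w < p.conjExponent := (inv_lt_inv₀ hpq.symm.pos hw0).1 <| by
    linarith [hpq.inv_add_inv_eq_one]
  obtain ⟨K, hK⟩ := exists_tsum_mul_le_near_add_far (Y := Y) A hpq hw hwq
  refine ⟨2 * K, fun k f hk hf b hb' hfb => ?_⟩
  rcases eq_or_ne b 0 with rfl | hb
  · have (y : Y) : f y = 0 := le_zero_iff.1 (hfb y)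
    simp only [this, mul_zero, tsum_zero, zero_le]
  have f_le : elpNorm p f ≤ 1 := ENNReal.rpow_le_one hf (one_div_nonneg.2 hpq.nonneg)
  -- Truncating at the level `b ^ (p / w)` balances the two contributions.
  have near : b * (b ^ (p / w)) ^ (1 - w) = b ^ (1 + p / w - p) := by
    rw [← ENNReal.rpow_mul]
    nth_rw 1 [← ENNReal.rpow_one b]
    rw [← ENNReal.rpow_add _ _ hb hb']
    congr 1
    field_simp
    ring
  have far : (b ^ (p / w)) ^ (1 - w / p.conjExponent) = b ^ (1 + p / w - p) := by
    rw [← ENNReal.rpow_mul, mul_sub, mul_one, div_mul_div_cancel₀ hw0.ne', hpq.div_conj_eq_sub_one]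
    congr 1
    ring
  calc ∑' y, k y * f y
      ≤ K * (b * (b ^ (p / w)) ^ (1 - w) +
          (b ^ (p / w)) ^ (1 - w / p.conjExponent) * elpNorm p f) :=
        hK k f hk _ b (ENNReal.rpow_pos (pos_iff_ne_zero.2 hb) hb').ne'
          (ENNReal.rpow_ne_top_of_ne_zero hb hb') hfb
    _ ≤ K * (b ^ (1 + p / w - p) + b ^ (1 + p / w - p) * 1) := by
        rw [near, far]
        gcongr
    _ = (2 * K : ℝ≥0) * b ^ (1 + p / w - p) := by
        push_cast
        ring

lemma exists_tsum_mul_tsum_ite_le (A : ℝ≥0) (hp : 1 < p) (ht : 1 < t) (hw : 1 < w)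
    (hptw : p⁻¹ + t⁻¹ + w⁻¹ = 2) :
    ∃ K : ℝ≥0, ∀ R : X → Y → ℝ≥0∞, (∀ x, IsWeakLp w A (R x)) → ∀ (f : Y → ℝ≥0∞) (g : X → ℝ≥0∞),
      ∑' y, f y ^ p ≤ 1 → ∑' x, g x ^ t ≤ 1 →
        ∑' x, g x * ∑' y, R x y * (if f y ^ p ≤ g x ^ t then f y else 0) ≤ K := by
  have hp0 : 0 < p := one_pos.trans hp
  have ht0 : 0 < t := one_pos.trans ht
  obtain ⟨K, hK⟩ := exists_tsum_mul_le_of_le (Y := Y) A hp hw <| by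
    linarith [inv_lt_one_of_one_lt₀ ht]
  refine ⟨K, fun R hR f g hf hg => ?_⟩
  have row_le (x : X) :
      g x * ∑' y, R x y * (if f y ^ p ≤ g x ^ t then f y else 0) ≤ K * g x ^ t := by
    have g_ne_top : g x ≠ ∞ := by
      intro hx
      have := (ENNReal.le_tsum x).trans hg
      simp [hx, ht0] at this
    have truncated_le : ∑' y, (if f y ^ p ≤ g x ^ t then f y else 0) ^ p ≤ 1 := by
      refine (ENNReal.tsum_le_tsum fun y => ?_).trans hf
      split_ifs
      exacts [le_rfl, by simp [hp0]]
    have le_level (y : Y) : (if f y ^ p ≤ g x ^ t then f y else 0) ≤ g x ^ (t / p) := by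
      split_ifs with h
      · rwa [← ENNReal.rpow_le_rpow_iff hp0, ← ENNReal.rpow_mul, div_mul_cancel₀ _ hp0.ne']
      · exact zero_le
    rcases eq_or_ne (g x) 0 with hx | hx
    · rw [hx, zero_mul]
      exact zero_le
    calc g x * ∑' y, R x y * (if f y ^ p ≤ g x ^ t then f y else 0)
        ≤ g x * (K * (g x ^ (t / p)) ^ (1 + p / w - p)) := by
          gcongr
          exact hK _ _ (hR x) truncated_le _
            (ENNReal.rpow_ne_top_of_ne_zero hx g_ne_top) le_level
      _ = K * (g x ^ (1 : ℝ) * g x ^ (t / p * (1 + p / w - p))) := by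
          rw [ENNReal.rpow_one, ENNReal.rpow_mul, mul_left_comm]
      _ = K * g x ^ t := by
          rw [← ENNReal.rpow_add _ _ hx g_ne_top]
          congr 2
          field_simp at hptw ⊢
          linear_combination hptw
  calc ∑' x, g x * ∑' y, R x y * (if f y ^ p ≤ g x ^ t then f y else 0)
      ≤ ∑' x, K * g x ^ t := ENNReal.tsum_le_tsum row_le
    _ ≤ K * 1 := by
        rw [ENNReal.tsum_mul_left]
        gcongr
    _ = K := mul_one _

lemma exists_tsum_mul_tsum_mul_le (A : ℝ≥0) (hp : 1 < p) (ht : 1 < t) (hw : 1 < w)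
    (hptw : p⁻¹ + t⁻¹ + w⁻¹ = 2) :
    ∃ K : ℝ≥0, ∀ R : X → Y → ℝ≥0∞, (∀ x, IsWeakLp w A (R x)) →
      (∀ y, IsWeakLp w A fun x => R x y) → ∀ (f : Y → ℝ≥0∞) (g : X → ℝ≥0∞),
        ∑' y, f y ^ p ≤ 1 → ∑' x, g x ^ t ≤ 1 → ∑' x, g x * ∑' y, R x y * f y ≤ K := by
  obtain ⟨K₁, hK₁⟩ := exists_tsum_mul_tsum_ite_le (X := X) (Y := Y) A hp ht hw hptw
  obtain ⟨K₂, hK₂⟩ := exists_tsum_mul_tsum_ite_le (X := Y) (Y := X) A ht hp hw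
    (by linarith)
  refine ⟨K₁ + K₂, fun R hrow hcol f g hf hg => ?_⟩
  have split (x : X) (y : Y) : g x * (R x y * f y) ≤
      g x * (R x y * if f y ^ p ≤ g x ^ t then f y else 0) +
        f y * (R x y * if g x ^ t ≤ f y ^ p then g x else 0) := by
    rcases le_total (f y ^ p) (g x ^ t) with h | h
    · rw [if_pos h]
      exact le_self_add
    · rw [if_pos h, mul_left_comm (f y), mul_comm (f y), ← mul_left_comm (g x)]
      exact le_add_self
  calc ∑' x, g x * ∑' y, R x y * f y
      ≤ ∑' x, ∑' y, (g x * (R x y * if f y ^ p ≤ g x ^ t then f y else 0) +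
          f y * (R x y * if g x ^ t ≤ f y ^ p then g x else 0)) := by
        simp only [← ENNReal.tsum_mul_left]
        exact ENNReal.tsum_le_tsum fun x => ENNReal.tsum_le_tsum (split x)
    _ = ∑' x, g x * ∑' y, R x y * (if f y ^ p ≤ g x ^ t then f y else 0) +
          ∑' y, f y * ∑' x, R x y * (if g x ^ t ≤ f y ^ p then g x else 0) := by
        simp only [ENNReal.tsum_add, ← ENNReal.tsum_mul_left]
        rw [ENNReal.tsum_comm (f := fun x y => f y * _)]
    _ ≤ (K₁ + K₂ : ℝ≥0) := by
        rw [ENNReal.coe_add]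
        exact add_le_add (hK₁ R hrow f g hf hg) (hK₂ (fun y x => R x y) hcol g f hg hf)

theorem exists_elpNorm_tsum_mul_le {r : ℝ} (A : ℝ≥0) (hp : 1 < p) (hw : 1 < w) (hr : 0 < r)
    (hpwr : p⁻¹ + w⁻¹ = 1 + r⁻¹) :
    ∃ K : ℝ≥0, ∀ R : X → Y → ℝ≥0∞, (∀ x, IsWeakLp w A (R x)) →
      (∀ y, IsWeakLp w A fun x => R x y) → ∀ f : Y → ℝ≥0∞,
        elpNorm r (fun x => ∑' y, R x y * f y) ≤ K * elpNorm p f := by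
  have hp0 : 0 < p := one_pos.trans hp
  have hr1 : 1 < r := (inv_lt_one₀ hr).1 <| by
    linarith [inv_lt_one_of_one_lt₀ hp, inv_lt_one_of_one_lt₀ hw]
  have hrt : r.HolderConjugate r.conjExponent := .conjExponent hr1
  obtain ⟨K, hK⟩ := exists_tsum_mul_tsum_mul_le (X := X) (Y := Y) A hp hrt.symm.lt hw
    (by linarith [hrt.inv_add_inv_eq_one])
  refine ⟨K + 1, fun R hrow hcol f => ?_⟩
  have normalized (h : Y → ℝ≥0∞) (hh : ∑' y, h y ^ p ≤ 1) :
      elpNorm r (fun x => ∑' y, R x y * h y) ≤ K :=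
    elpNorm_le_of_forall_tsum_mul_le hrt fun g hg => hK R hrow hcol h g hh hg
  rcases eq_or_ne (elpNorm p f) 0 with hf | hf
  · have (y : Y) : f y = 0 := le_zero_iff.1 ((le_elpNorm hp0 f y).trans hf.le)
    simp only [this, mul_zero, tsum_zero, elpNorm, ENNReal.zero_rpow_of_pos hr, one_div,
      ENNReal.zero_rpow_of_pos (inv_pos.2 hr), zero_le]
  rcases eq_or_ne (elpNorm p f) ∞ with hf' | hf'
  · rw [hf', ENNReal.mul_top (by simp)]
    exact le_top
  set n := elpNorm p f
  have unit_norm : ∑' y, (n⁻¹ * f y) ^ p ≤ 1 := by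
    rw [← elpNorm_rpow hp0.ne', elpNorm_const_mul hp0, ENNReal.inv_mul_cancel hf hf',
      ENNReal.one_rpow]
  calc elpNorm r (fun x => ∑' y, R x y * f y)
      = n * elpNorm r (fun x => ∑' y, R x y * (n⁻¹ * f y)) := by
        rw [← elpNorm_const_mul hr]
        simp only [mul_left_comm (R _ _), ENNReal.tsum_mul_left]
        simp only [← mul_assoc n, ENNReal.mul_inv_cancel hf hf', one_mul]
    _ ≤ n * (K + 1 : ℝ≥0) := by
        gcongr
        exact (normalized _ unit_norm).trans (by exact_mod_cast le_self_add)
    _ = (K + 1 : ℝ≥0) * n := mul_comm _ _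

end WeakYoung

section WordMetric

variable [Group G] {S : Finset G} {x y : G}

lemma exists_list_of_wordDist (hgen : Subgroup.closure (S : Set G) = ⊤)
    (hsymm : ∀ s ∈ S, s⁻¹ ∈ S) (x y : G) :
    ∃ l : List G, (∀ s ∈ l, s ∈ S) ∧ l.length = wordDist S x y ∧ y = x * l.prod := by
  have mem_closure : x⁻¹ * y ∈ (Subgroup.closure (S : Set G)).toSubmonoid :=
    hgen ▸ Subgroup.mem_top _
  rw [Subgroup.closure_toSubmonoid] at mem_closure
  obtain ⟨l, hl, hprod⟩ := Submonoid.exists_list_of_mem_closure mem_closure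
  have word_exists :
      {k | ∃ l : List G, (∀ s ∈ l, s ∈ S) ∧ l.length = k ∧ y = x * l.prod}.Nonempty := by
    refine ⟨l.length, l, fun s hs => (hl s hs).elim id fun h => ?_, rfl, ?_⟩
    · simpa only [inv_inv] using hsymm _ h
    · rw [hprod, mul_inv_cancel_left]
  exact Nat.sInf_mem word_exists

lemma wordDist_one_inv_mul (S : Finset G) (x y : G) :
    wordDist S 1 (x⁻¹ * y) = wordDist S x y := by
  simp only [wordDist, one_mul, inv_mul_eq_iff_eq_mul]

lemma wordDist_self (S : Finset G) (x : G) : wordDist S x x = 0 :=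
  Nat.sInf_eq_zero.2 <| .inl ⟨[], by simp⟩

lemma wordDist_pos (hgen : Subgroup.closure (S : Set G) = ⊤) (hsymm : ∀ s ∈ S, s⁻¹ ∈ S)
    (hxy : x ≠ y) : 0 < wordDist S x y := by
  obtain ⟨l, -, hlen, hy⟩ := exists_list_of_wordDist hgen hsymm x y
  rw [← hlen, List.length_pos_iff]
  rintro rfl
  exact hxy (by simpa using hy.symm)

lemma wordDist_comm (hsymm : ∀ s ∈ S, s⁻¹ ∈ S) (x y : G) : wordDist S x y = wordDist S y x := by
  have reverse_word (x y : G) (k : ℕ)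
      (h : ∃ l : List G, (∀ s ∈ l, s ∈ S) ∧ l.length = k ∧ y = x * l.prod) :
      ∃ l : List G, (∀ s ∈ l, s ∈ S) ∧ l.length = k ∧ x = y * l.prod := by
    obtain ⟨l, hl, hlen, rfl⟩ := h
    refine ⟨(l.map (·⁻¹)).reverse, ?_, by simpa using hlen, ?_⟩
    · simpa using fun s hs => inv_inv s ▸ hsymm _ (hl _ hs)
    · rw [← List.prod_inv_reverse, mul_inv_cancel_right]
  simp only [wordDist]
  congr 1
  exact Set.ext fun k => ⟨reverse_word x y k, reverse_word y x k⟩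

/-- The ball of radius `n` about the identity in the word metric. -/
def wordBall (S : Finset G) (n : ℕ) : Set G := {x | wordDist S 1 x ≤ n}

lemma encard_setOf_wordDist_le (S : Finset G) (x : G) (n : ℕ) :
    {y | wordDist S x y ≤ n}.encard = (wordBall S n).encard := by
  simp only [← wordDist_one_inv_mul S x]
  exact Set.encard_preimage_of_bijective (Group.mulLeft_bijective x⁻¹) (wordBall S n)

end WordMetric

section RieszKernel

variable {Y : Type*}

lemma isWeakLp_of_le_rpow {k : Y → ℝ≥0∞} {ρ : Y → ℕ} {c C : ℝ≥0} {D β : ℝ} (hD : 0 < D)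
    (hβ : 0 < β) (hρ : ∀ n, 1 ≤ n → ({y | ρ y ≤ n}.encard : ℝ≥0∞) ≤ C * (n : ℝ≥0∞) ^ D)
    (hk : ∀ y, k y ≤ c * (max 1 (ρ y) : ℕ) ^ (-β)) :
    IsWeakLp (D / β) (C * c ^ (D / β)) k := by
  have hw : 0 < D / β := div_pos hD hβ
  intro a
  rcases {y | a < k y}.eq_empty_or_nonempty with h | ⟨y₀, hy₀⟩
  · simp [h]
  rcases eq_or_ne a 0 with rfl | ha
  · simp [hw]
  lift a to ℝ≥0 using hy₀.ne_top
  have ha₀ : a ≠ 0 := by exact_mod_cast ha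
  have radius_le (y : Y) (hy : a < k y) : max 1 (ρ y) ≤ ⌊(c / a) ^ β⁻¹⌋₊ := by
    have hM : ((max 1 (ρ y) : ℕ) : ℝ≥0) ≠ 0 := by positivity
    have := hy.trans_le (hk y)
    rw [← ENNReal.coe_natCast, ← ENNReal.coe_rpow_of_ne_zero hM, ← ENNReal.coe_mul,
      ENNReal.coe_lt_coe, NNReal.rpow_neg, ← div_eq_mul_inv,
      lt_div_iff₀ (NNReal.rpow_pos (pos_iff_ne_zero.2 hM)), mul_comm,
      ← lt_div_iff₀ (pos_iff_ne_zero.2 ha₀)] at this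
    exact Nat.le_floor ((NNReal.le_rpow_inv_iff hβ).2 this.le)
  have level_subset : {y | (a : ℝ≥0∞) < k y} ⊆ {y | ρ y ≤ ⌊(c / a) ^ β⁻¹⌋₊} := fun y hy =>
    (le_max_right _ _).trans (radius_le y hy)
  calc (a : ℝ≥0∞) ^ (D / β) * ({y | (a : ℝ≥0∞) < k y}.encard : ℝ≥0∞)
      ≤ a ^ (D / β) * (C * (⌊(c / a) ^ β⁻¹⌋₊ : ℝ≥0∞) ^ D) := by
        gcongr
        exact le_trans (by exact_mod_cast Set.encard_le_encard level_subset)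
          (hρ _ ((le_max_left _ _).trans (radius_le y₀ hy₀)))
    _ ≤ a ^ (D / β) * (C * (((c / a) ^ β⁻¹ : ℝ≥0) : ℝ≥0∞) ^ D) := by
        gcongr
        exact_mod_cast Nat.floor_le zero_le
    _ = (C * c ^ (D / β) : ℝ≥0) := by
        rw [← ENNReal.coe_rpow_of_nonneg _ hD.le, ← ENNReal.coe_rpow_of_nonneg _ hw.le,
          ← NNReal.rpow_mul, inv_mul_eq_div, NNReal.div_rpow]
        norm_cast
        have : a ^ (D / β) ≠ 0 := by positivity
        field_simp

variable [Group G] {S : Finset G} {R : G → G → ℝ} {c C : ℝ≥0} {D α : ℝ}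

lemma enorm_kernel_le (hgen : Subgroup.closure (S : Set G) = ⊤) (hsymm : ∀ s ∈ S, s⁻¹ ∈ S)
    (hoff : ∀ x y, x ≠ y → |R x y| ≤ c * (wordDist S x y : ℝ) ^ (α - D))
    (hdiag : ∀ x, |R x x| ≤ c) (x y : G) :
    ‖R x y‖ₑ ≤ c * (max 1 (wordDist S x y) : ℕ) ^ (-(D - α)) := by
  rcases eq_or_ne x y with rfl | hxy
  · rw [wordDist_self, max_eq_left zero_le_one, Nat.cast_one, ENNReal.one_rpow, mul_one]
    exact_mod_cast hdiag x
  · have hd := wordDist_pos hgen hsymm hxy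
    rw [max_eq_right hd, neg_sub, ← ENNReal.coe_natCast,
      ← ENNReal.coe_rpow_of_ne_zero (by positivity)]
    exact_mod_cast hoff x y hxy

theorem exists_elpNorm_tsum_kernel_mul_le (hgen : Subgroup.closure (S : Set G) = ⊤)
    (hsymm : ∀ s ∈ S, s⁻¹ ∈ S) (hα : 0 < α) (hαD : α < D)
    (hball : ∀ n, 1 ≤ n → ((wordBall S n).encard : ℝ≥0∞) ≤ C * (n : ℝ≥0∞) ^ D)
    (hoff : ∀ x y, x ≠ y → |R x y| ≤ c * (wordDist S x y : ℝ) ^ (α - D))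
    (hdiag : ∀ x, |R x x| ≤ c) {p r : ℝ} (hp : 1 < p) (hr : 0 < r) (hpr : r⁻¹ = p⁻¹ - α / D) :
    ∃ K : ℝ≥0, ∀ f : G → ℝ≥0∞,
      elpNorm r (fun x => ∑' y, ‖R x y‖ₑ * f y) ≤ K * elpNorm p f := by
  have hD : 0 < D := hα.trans hαD
  have hβ : 0 < D - α := sub_pos.2 hαD
  have row (x : G) : IsWeakLp (D / (D - α)) (C * c ^ (D / (D - α))) fun y => ‖R x y‖ₑ :=
    isWeakLp_of_le_rpow hD hβ (fun n hn => encard_setOf_wordDist_le S x n ▸ hball n hn)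
      (enorm_kernel_le hgen hsymm hoff hdiag x)
  have col (y : G) : IsWeakLp (D / (D - α)) (C * c ^ (D / (D - α))) fun x => ‖R x y‖ₑ :=
    isWeakLp_of_le_rpow hD hβ (fun n hn => encard_setOf_wordDist_le S y n ▸ hball n hn) fun x =>
      wordDist_comm hsymm x y ▸ enorm_kernel_le hgen hsymm hoff hdiag x y
  obtain ⟨K, hK⟩ := exists_elpNorm_tsum_mul_le (X := G) (Y := G) (w := D / (D - α))
    (C * c ^ (D / (D - α))) hp ((one_lt_div hβ).2 (sub_lt_self D hα)) hr
    (by rw [hpr, inv_div, sub_div, div_self hD.ne']; ring)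
  exact ⟨K, hK _ row col⟩

end RieszKernel

section DirichletEnergy

variable [Group G] {S : Finset G} {p : ℝ} {u v : G → ℝ}

/-- The `p`-th power of the `D^{1,p}` seminorm, valued in `ℝ≥0∞`. -/
def dirichletEnergy (S : Finset G) (p : ℝ) (u : G → ℝ) : ℝ≥0∞ :=
  ∑' x, ∑ s ∈ S, ‖u (x * s) - u x‖ₑ ^ p

lemma elpNorm_translate_sub_le_length (hp : 1 ≤ p) (u : G → ℝ) (l : List G)
    (hl : ∀ s ∈ l, s ∈ S) :
    elpNorm p (fun x => ‖u (x * l.prod) - u x‖ₑ) ≤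
      l.length * dirichletEnergy S p u ^ (1 / p) := by
  have hp0 : 0 < p := one_pos.trans_le hp
  induction l with
  | nil => simp [elpNorm, hp0]
  | cons s l ih =>
    have generator : elpNorm p (fun x => ‖u (x * s) - u x‖ₑ) ≤ dirichletEnergy S p u ^ (1 / p) :=
      ENNReal.rpow_le_rpow (ENNReal.tsum_le_tsum fun x =>
        Finset.single_le_sum (f := fun s => ‖u (x * s) - u x‖ₑ ^ p) (fun _ _ => zero_le)
          (hl s List.mem_cons_self)) (one_div_nonneg.2 hp0.le)
    calc elpNorm p (fun x => ‖u (x * (s :: l).prod) - u x‖ₑ)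
        ≤ elpNorm p (fun x => ‖u (x * s * l.prod) - u (x * s)‖ₑ + ‖u (x * s) - u x‖ₑ) := by
          refine elpNorm_mono hp0.le fun x => ?_
          rw [List.prod_cons, ← mul_assoc, ← sub_add_sub_cancel _ (u (x * s))]
          exact enorm_add_le _ _
      _ ≤ elpNorm p (fun x => ‖u (x * s * l.prod) - u (x * s)‖ₑ) +
            elpNorm p (fun x => ‖u (x * s) - u x‖ₑ) := elpNorm_add_le hp _ _
      _ ≤ l.length * dirichletEnergy S p u ^ (1 / p) + dirichletEnergy S p u ^ (1 / p) := by
          refine add_le_add ?_ generator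
          exact (elpNorm_comp_equiv (Equiv.mulRight s) fun x => ‖u (x * l.prod) - u x‖ₑ).trans_le
            (ih fun t ht => hl t (List.mem_cons_of_mem s ht))
      _ = (s :: l).length * dirichletEnergy S p u ^ (1 / p) := by
          rw [List.length_cons]
          push_cast
          ring

lemma tsum_translate_sub_le (hgen : Subgroup.closure (S : Set G) = ⊤)
    (hsymm : ∀ s ∈ S, s⁻¹ ∈ S) (hp : 1 ≤ p) (u : G → ℝ) {n : ℕ} {h : G}
    (hh : wordDist S 1 h ≤ n) :
    ∑' x, ‖u (x * h) - u x‖ₑ ^ p ≤ (n : ℝ≥0∞) ^ p * dirichletEnergy S p u := by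
  have hp0 : 0 < p := one_pos.trans_le hp
  obtain ⟨l, hl, hlen, hprod⟩ := exists_list_of_wordDist hgen hsymm 1 h
  rw [one_mul] at hprod
  subst hprod
  calc ∑' x, ‖u (x * l.prod) - u x‖ₑ ^ p
      = elpNorm p (fun x => ‖u (x * l.prod) - u x‖ₑ) ^ p := (elpNorm_rpow hp0.ne' _).symm
    _ ≤ (l.length * dirichletEnergy S p u ^ (1 / p)) ^ p := by
        gcongr
        exact elpNorm_translate_sub_le_length hp u l hl
    _ ≤ (n * dirichletEnergy S p u ^ (1 / p)) ^ p := by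
        gcongr
        exact hlen.trans_le hh
    _ = (n : ℝ≥0∞) ^ p * dirichletEnergy S p u := by
        rw [ENNReal.mul_rpow_of_nonneg _ _ hp0.le, one_div, ENNReal.rpow_inv_rpow hp0.ne']

lemma tsum_rpow_le_of_translates {Ω B : Finset G} (hB : B.Nonempty)
    (hΩ : ∀ x ∉ Ω, v x = 0) (hcard : 2 * Ω.card ≤ B.card) {M : ℝ≥0∞}
    (hM : ∀ h ∈ B, ∑' x, ‖v (x * h) - v x‖ₑ ^ p ≤ M) : ∑' x, ‖v x‖ₑ ^ p ≤ 2 * M := by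
  classical
  have escaping (x : G) : B.card ≤ 2 * (B.filter fun h => v (x * h) = 0).card := by
    have : (B.filter fun h => ¬v (x * h) = 0).card ≤ Ω.card :=
      Finset.card_le_card_of_injOn (x * ·)
        (fun h hh => not_imp_comm.1 (hΩ _) (Finset.mem_filter.1 hh).2)
        (mul_right_injective x).injOn
    have := B.card_filter_add_card_filter_not fun h => v (x * h) = 0
    omega
  have pointwise (x : G) : B.card * ‖v x‖ₑ ^ p ≤ 2 * ∑ h ∈ B, ‖v (x * h) - v x‖ₑ ^ p := by
    calc (B.card : ℝ≥0∞) * ‖v x‖ₑ ^ p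
        ≤ (2 * (B.filter fun h => v (x * h) = 0).card : ℕ) * ‖v x‖ₑ ^ p := by
          gcongr
          exact escaping x
      _ = 2 * ∑ h ∈ B with v (x * h) = 0, ‖v (x * h) - v x‖ₑ ^ p := by
          rw [Finset.sum_congr rfl fun _ hh => by
            rw [(Finset.mem_filter.1 hh).2, zero_sub, enorm_neg], Finset.sum_const, nsmul_eq_mul,
            Nat.cast_mul, Nat.cast_ofNat, mul_assoc]
      _ ≤ 2 * ∑ h ∈ B, ‖v (x * h) - v x‖ₑ ^ p := by
          gcongr
          exact Finset.filter_subset _ _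
  have card_ne_zero : (B.card : ℝ≥0∞) ≠ 0 := by exact_mod_cast hB.card_ne_zero
  rw [← ENNReal.mul_le_mul_iff_right card_ne_zero (ENNReal.natCast_ne_top _)]
  calc (B.card : ℝ≥0∞) * ∑' x, ‖v x‖ₑ ^ p
      ≤ ∑' x, 2 * ∑ h ∈ B, ‖v (x * h) - v x‖ₑ ^ p := by
        rw [← ENNReal.tsum_mul_left]
        exact ENNReal.tsum_le_tsum pointwise
    _ = 2 * ∑ h ∈ B, ∑' x, ‖v (x * h) - v x‖ₑ ^ p := by
        rw [ENNReal.tsum_mul_left, Summable.tsum_finsetSum fun _ _ => ENNReal.summable]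
    _ ≤ 2 * ∑ _h ∈ B, M := by
        gcongr with h hh
        exact hM h hh
    _ = B.card * (2 * M) := by
        rw [Finset.sum_const, nsmul_eq_mul, mul_left_comm]

/-- The Faber–Krahn inequality of dimension `D` for the `p`-Laplacian, with constant `K`. -/
def FaberKrahn (S : Finset G) (D p : ℝ) (K : ℝ≥0) : Prop :=
  ∀ (v : G → ℝ) (Ω : Finset G), (∀ x ∉ Ω, v x = 0) →
    ∑' x, ‖v x‖ₑ ^ p ≤ K * (Ω.card : ℝ≥0∞) ^ (p / D) * dirichletEnergy S p v

lemma exists_radius_le {c D : ℝ} (hc : 0 < c) (hD : 0 < D) :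
    ∃ K : ℝ≥0, ∀ m : ℕ, 1 ≤ m → ∃ n : ℕ, 1 ≤ n ∧ 2 * m ≤ c * (n : ℝ) ^ D ∧
      (n : ℝ≥0∞) ≤ K * (m : ℝ≥0∞) ^ (1 / D) := by
  obtain ⟨K, hK⟩ : ∃ K : ℝ≥0, (K : ℝ) = (2 / c) ^ (1 / D) + 1 := ⟨⟨_, by positivity⟩, rfl⟩
  refine ⟨K, fun m hm => ⟨⌈(2 * m / c) ^ (1 / D)⌉₊, ?_, ?_, ?_⟩⟩
  · have : (0 : ℝ) < m := by exact_mod_cast hm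
    exact Nat.one_le_ceil_iff.2 (by positivity)
  · rw [← div_le_iff₀' hc]
    calc 2 * m / c = ((2 * m / c) ^ (1 / D)) ^ D := by
          rw [one_div, Real.rpow_inv_rpow (by positivity) hD.ne']
      _ ≤ (⌈(2 * m / c) ^ (1 / D)⌉₊ : ℝ) ^ D := by
          gcongr
          exact Nat.le_ceil _
  · have one_le : (1 : ℝ) ≤ m ^ (1 / D) :=
      Real.one_le_rpow (by exact_mod_cast hm) (one_div_nonneg.2 hD.le)
    have : (⌈(2 * m / c) ^ (1 / D)⌉₊ : ℝ) ≤ K * m ^ (1 / D) := by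
      rw [hK]
      refine (Nat.ceil_lt_add_one (by positivity)).le.trans ?_
      rw [mul_div_right_comm, Real.mul_rpow (by positivity) (by positivity), add_mul, one_mul]
      gcongr
    rw [← ENNReal.coe_natCast, ← ENNReal.coe_natCast m,
      ← ENNReal.coe_rpow_of_nonneg _ (one_div_nonneg.2 hD.le), ← ENNReal.coe_mul]
    exact_mod_cast this

lemma exists_faberKrahn (hgen : Subgroup.closure (S : Set G) = ⊤)
    (hsymm : ∀ s ∈ S, s⁻¹ ∈ S) {c D : ℝ} (hc : 0 < c) (hD : 0 < D)
    (hball : ∀ n : ℕ, 1 ≤ n → c * (n : ℝ) ^ D ≤ (wordBall S n).ncard) (hp : 1 ≤ p) :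
    ∃ K : ℝ≥0, FaberKrahn S D p K := by
  have hp0 : 0 < p := one_pos.trans_le hp
  obtain ⟨K, hK⟩ := exists_radius_le hc hD
  refine ⟨2 * K ^ p, fun v Ω hΩ => ?_⟩
  rcases Ω.eq_empty_or_nonempty with rfl | hne
  · have (x : G) : v x = 0 := hΩ x (Finset.notMem_empty x)
    simp only [this, enorm_zero, ENNReal.zero_rpow_of_pos hp0, tsum_zero, zero_le]
  obtain ⟨n, hn, hcard, hnK⟩ := hK Ω.card hne.card_pos
  have card_le : 2 * Ω.card ≤ (wordBall S n).ncard := by exact_mod_cast hcard.trans (hball n hn)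
  have ncard_pos : 0 < (wordBall S n).ncard := by have := hne.card_pos; omega
  obtain ⟨B, hB⟩ := (Set.finite_of_ncard_pos ncard_pos).exists_finset_coe
  rw [← hB, Set.ncard_coe_finset] at card_le ncard_pos
  calc ∑' x, ‖v x‖ₑ ^ p ≤ 2 * ((n : ℝ≥0∞) ^ p * dirichletEnergy S p v) :=
        tsum_rpow_le_of_translates (Finset.card_pos.1 ncard_pos) hΩ card_le fun h hh =>
          tsum_translate_sub_le hgen hsymm hp v
            (show h ∈ wordBall S n from hB ▸ Finset.mem_coe.2 hh)
    _ ≤ 2 * ((K * (Ω.card : ℝ≥0∞) ^ (1 / D)) ^ p * dirichletEnergy S p v) := by gcongr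
    _ = (2 * K ^ p : ℝ≥0) * (Ω.card : ℝ≥0∞) ^ (p / D) * dirichletEnergy S p v := by
        rw [ENNReal.mul_rpow_of_nonneg _ _ hp0.le, ← ENNReal.rpow_mul, one_div_mul_eq_div]
        push_cast
        rw [ENNReal.coe_rpow_of_nonneg _ hp0.le]
        ring

end DirichletEnergy

section DyadicSlices

variable {s t : ℝ}

/-- The part of the height `s` lying between the levels `2 ^ k` and `2 ^ (k + 1)`. -/
def dyadicSlice (k : ℤ) (s : ℝ) : ℝ := min s (2 ^ (k + 1)) - min s (2 ^ k)

lemma dyadicSlice_of_le {k : ℤ} (h : s ≤ 2 ^ k) : dyadicSlice k s = 0 := by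
  have : (2 : ℝ) ^ k ≤ 2 ^ (k + 1) := zpow_le_zpow_right₀ one_le_two (Int.le_add_one le_rfl)
  rw [dyadicSlice, min_eq_left h, min_eq_left (h.trans this), sub_self]

lemma dyadicSlice_of_ge {k : ℤ} (h : 2 ^ (k + 1) ≤ s) : dyadicSlice k s = 2 ^ k := by
  have : (2 : ℝ) ^ k ≤ 2 ^ (k + 1) := zpow_le_zpow_right₀ one_le_two (Int.le_add_one le_rfl)
  rw [dyadicSlice, min_eq_right h, min_eq_right (this.trans h), zpow_add_one₀ two_ne_zero]
  ring

lemma enorm_dyadicSlice_sub_le_volume (k : ℤ) (hst : s ≤ t) :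
    ‖dyadicSlice k t - dyadicSlice k s‖ₑ ≤
      MeasureTheory.volume (Set.Ioc s t ∩ Set.Ioc (2 ^ k) (2 ^ (k + 1))) := by
  have hk : (2 : ℝ) ^ k ≤ 2 ^ (k + 1) := zpow_le_zpow_right₀ one_le_two (Int.le_add_one le_rfl)
  rcases le_or_gt t (2 ^ k) with ht | ht
  · rw [dyadicSlice_of_le ht, dyadicSlice_of_le (hst.trans ht), sub_self, enorm_zero]
    exact zero_le
  rcases le_or_gt (2 ^ (k + 1)) s with hs | hs
  · rw [dyadicSlice_of_ge hs, dyadicSlice_of_ge (hs.trans hst), sub_self, enorm_zero]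
    exact zero_le
  have overlap : max s (2 ^ k) ≤ min t (2 ^ (k + 1)) :=
    max_le (le_min hst hs.le) (le_min ht.le hk)
  have increment :
      dyadicSlice k t - dyadicSlice k s = min t (2 ^ (k + 1)) - max s (2 ^ k) := by
    rw [dyadicSlice, dyadicSlice, min_eq_right ht.le, min_eq_left hs.le]
    linarith [min_add_max s (2 ^ k)]
  rw [increment, Set.Ioc_inter_Ioc, Real.volume_Ioc, Real.enorm_of_nonneg (sub_nonneg.2 overlap)]

lemma tsum_enorm_dyadicSlice_sub_le (s t : ℝ) :
    ∑' k, ‖dyadicSlice k t - dyadicSlice k s‖ₑ ≤ ‖t - s‖ₑ := by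
  wlog hst : s ≤ t generalizing s t
  · simpa only [enorm_sub_rev] using this t s (le_of_not_ge hst)
  have monotone_levels : Monotone fun k : ℤ => (2 : ℝ) ^ k := zpow_right_mono₀ one_le_two
  calc ∑' k, ‖dyadicSlice k t - dyadicSlice k s‖ₑ
      ≤ ∑' k : ℤ, MeasureTheory.volume (Set.Ioc s t ∩ Set.Ioc (2 ^ k) (2 ^ (k + 1))) :=
        ENNReal.tsum_le_tsum fun k => enorm_dyadicSlice_sub_le_volume k hst
    _ ≤ MeasureTheory.volume (⋃ k : ℤ, Set.Ioc s t ∩ Set.Ioc (2 ^ k) (2 ^ (k + 1))) :=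
        MeasureTheory.tsum_meas_le_meas_iUnion_of_disjoint _
          (fun k => measurableSet_Ioc.inter measurableSet_Ioc) fun i j hij =>
            (monotone_levels.pairwise_disjoint_on_Ioc_succ hij).mono Set.inter_subset_right
              Set.inter_subset_right
    _ ≤ MeasureTheory.volume (Set.Ioc s t) :=
        MeasureTheory.measure_mono (Set.iUnion_subset fun k => Set.inter_subset_left)
    _ = ‖t - s‖ₑ := by
        rw [Real.volume_Ioc, Real.enorm_of_nonneg (sub_nonneg.2 hst)]

lemma tsum_enorm_dyadicSlice_sub_rpow_le {p : ℝ} (hp : 1 ≤ p) (s t : ℝ) :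
    ∑' k, ‖dyadicSlice k t - dyadicSlice k s‖ₑ ^ p ≤ ‖t - s‖ₑ ^ p := by
  have hp0 : 0 < p := one_pos.trans_le hp
  rw [← elpNorm_rpow hp0.ne']
  gcongr
  refine (elpNorm_anti one_pos hp _).trans ?_
  rw [elpNorm_one]
  exact tsum_enorm_dyadicSlice_sub_le s t

lemma tsum_dirichletEnergy_dyadicSlice_le [Group G] (S : Finset G) {p : ℝ} (hp : 1 ≤ p)
    (u : G → ℝ) :
    ∑' k, dirichletEnergy S p (fun x => dyadicSlice k |u x|) ≤ dirichletEnergy S p u := by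
  simp only [dirichletEnergy]
  rw [ENNReal.tsum_comm]
  refine ENNReal.tsum_le_tsum fun x => ?_
  rw [Summable.tsum_finsetSum fun _ _ => ENNReal.summable]
  gcongr with s
  calc ∑' k, ‖dyadicSlice k |u (x * s)| - dyadicSlice k |u x|‖ₑ ^ p
      ≤ ‖|u (x * s)| - |u x|‖ₑ ^ p := tsum_enorm_dyadicSlice_sub_rpow_le hp _ _
    _ ≤ ‖u (x * s) - u x‖ₑ ^ p := by
        gcongr
        exact enorm_le_iff_norm_le.2 (abs_abs_sub_abs_le _ _)

end DyadicSlices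

section Sobolev

variable {X : Type*} {f : X → ℝ≥0∞} {p q : ℝ}

lemma isWeakLp_of_tsum_rpow_le {A : ℝ≥0} (hq : 0 ≤ q) (hf : ∑' x, f x ^ q ≤ A) :
    IsWeakLp q A f := by
  classical
  intro a
  rw [← tsum_ite_const fun x => a < f x]
  refine (ENNReal.tsum_le_tsum fun x => ?_).trans hf
  split_ifs with h
  exacts [ENNReal.rpow_le_rpow h.le hq, zero_le]

lemma tsum_rpow_le_tsum_superlevel (hq : 0 < q) (hf : ∀ x, f x ≠ ∞) :
    ∑' x, f x ^ q ≤ 4 ^ q * ∑' k : ℤ, ((2 : ℝ≥0∞) ^ k) ^ q * {x | 2 ^ (k + 1) < f x}.encard := by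
  classical
  have mem_level (x : X) :
      f x ^ q ≤ ∑' k : ℤ, if 2 ^ (k + 1) < f x then (4 * 2 ^ k) ^ q else 0 := by
    rcases eq_or_ne (f x) 0 with hx | hx
    · rw [hx, ENNReal.zero_rpow_of_pos hq]
      exact zero_le
    obtain ⟨n, hn, hn'⟩ := ENNReal.exists_mem_Ioc_zpow hx (hf x) ENNReal.one_lt_two
      ENNReal.ofNat_ne_top
    obtain ⟨k, rfl⟩ : ∃ k, n = k + 1 := ⟨n - 1, (sub_add_cancel n 1).symm⟩
    have four : (4 : ℝ≥0∞) * 2 ^ k = 2 ^ (k + 1 + 1) := by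
      rw [add_assoc, ENNReal.zpow_add two_ne_zero ENNReal.ofNat_ne_top, mul_comm]
      norm_num
    calc f x ^ q ≤ (4 * 2 ^ k) ^ q := by
          rw [four]
          gcongr
      _ = if 2 ^ (k + 1) < f x then (4 * 2 ^ k) ^ q else 0 := (if_pos hn).symm
      _ ≤ ∑' k : ℤ, if 2 ^ (k + 1) < f x then (4 * 2 ^ k) ^ q else 0 :=
          ENNReal.le_tsum (f := fun k : ℤ => if 2 ^ (k + 1) < f x then (4 * 2 ^ k) ^ q else 0) k
  calc ∑' x, f x ^ q
      ≤ ∑' x, ∑' k : ℤ, if 2 ^ (k + 1) < f x then (4 * 2 ^ k) ^ q else 0 :=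
        ENNReal.tsum_le_tsum mem_level
    _ = ∑' k : ℤ, (4 * (2 : ℝ≥0∞) ^ k) ^ q * {x | 2 ^ (k + 1) < f x}.encard := by
        rw [ENNReal.tsum_comm]
        exact tsum_congr fun k => tsum_ite_const _ _
    _ = 4 ^ q * ∑' k : ℤ, ((2 : ℝ≥0∞) ^ k) ^ q * {x | 2 ^ (k + 1) < f x}.encard := by
        simp only [ENNReal.mul_rpow_of_nonneg _ _ hq.le, mul_assoc, ENNReal.tsum_mul_left]

lemma enorm_two_zpow (k : ℤ) : ‖(2 : ℝ) ^ k‖ₑ = 2 ^ k := by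
  rw [enorm_eq_nnnorm, nnnorm_zpow, ENNReal.coe_zpow (by simp), Real.nnnorm_two, ENNReal.coe_ofNat]

lemma two_zpow_lt_enorm_iff {k : ℤ} {s : ℝ} : (2 : ℝ≥0∞) ^ k < ‖s‖ₑ ↔ 2 ^ k < |s| := by
  rw [← enorm_two_zpow, ← not_le, enorm_le_iff_norm_le, not_le, Real.norm_eq_abs, Real.norm_eq_abs,
    abs_of_pos (by positivity : (0 : ℝ) < 2 ^ k)]

lemma superlevel_le_tsum_dyadicSlice (p : ℝ) (u : X → ℝ) (k : ℤ) :
    ((2 : ℝ≥0∞) ^ k) ^ p * {x | 2 ^ (k + 1) < ‖u x‖ₑ}.encard ≤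
      ∑' x, ‖dyadicSlice k |u x|‖ₑ ^ p := by
  classical
  rw [← tsum_ite_const fun x => 2 ^ (k + 1) < ‖u x‖ₑ]
  refine ENNReal.tsum_le_tsum fun x => ?_
  split_ifs with h
  · rw [dyadicSlice_of_ge (two_zpow_lt_enorm_iff.1 h).le, enorm_two_zpow]
  · exact zero_le

lemma sobolevExponent_pos {D : ℝ} (hp : 0 < p) (hpD : p < D) (hpq : q⁻¹ = p⁻¹ - D⁻¹) : 0 < q :=
  inv_pos.1 (hpq ▸ sub_pos.2 (inv_strictAnti₀ hp hpD))

variable [Group G] {S : Finset G} {u : G → ℝ} {D : ℝ} {K : ℝ≥0}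

lemma FaberKrahn.superlevel_le (hK : FaberKrahn S D p K) (hp : 0 < p) (hpD : p < D)
    (hpq : q⁻¹ = p⁻¹ - D⁻¹) (hu : ∑' x, ‖u x‖ₑ ^ q ≠ ∞) (k : ℤ) :
    ((2 : ℝ≥0∞) ^ k) ^ q * {x | 2 ^ (k + 1) < ‖u x‖ₑ}.encard ≤
      K * (∑' x, ‖u x‖ₑ ^ q) ^ (p / D) * dirichletEnergy S p fun x => dyadicSlice k |u x| := by
  have hD : 0 < D := hp.trans hpD
  have hq : 0 < q := sobolevExponent_pos hp hpD hpq
  set a : ℝ≥0∞ := 2 ^ k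
  have ha₀ : a ≠ 0 := (ENNReal.zpow_pos two_ne_zero ENNReal.ofNat_ne_top k).ne'
  have ha' : a ≠ ∞ := (ENNReal.zpow_lt_top two_ne_zero ENNReal.ofNat_ne_top k).ne
  have chebyshev : a ^ q * {x | a < ‖u x‖ₑ}.encard ≤ ∑' x, ‖u x‖ₑ ^ q :=
    (isWeakLp_of_tsum_rpow_le hq.le (ENNReal.coe_toNNReal hu).ge a).trans
      (ENNReal.coe_toNNReal hu).le
  have finite : {x | a < ‖u x‖ₑ}.Finite := by
    refine Set.encard_ne_top_iff.1 fun h => hu (top_le_iff.1 ?_)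
    rwa [h, ENat.toENNReal_top, ENNReal.mul_top (ENNReal.rpow_pos (pos_iff_ne_zero.2 ha₀) ha').ne']
      at chebyshev
  rw [finite.encard_eq_coe_toFinset_card, ENat.toENNReal_coe] at chebyshev
  have exponents : a ^ q = (a ^ q) ^ (p / D) * a ^ p := by
    rw [← ENNReal.rpow_mul, ← ENNReal.rpow_add _ _ ha₀ ha']
    congr 1
    field_simp at hpq ⊢
    linear_combination -hpq
  calc a ^ q * {x | 2 ^ (k + 1) < ‖u x‖ₑ}.encard
      = (a ^ q) ^ (p / D) * (a ^ p * {x | 2 ^ (k + 1) < ‖u x‖ₑ}.encard) := by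
        rw [← mul_assoc, ← exponents]
    _ ≤ (a ^ q) ^ (p / D) * (K * (finite.toFinset.card : ℝ≥0∞) ^ (p / D) *
          dirichletEnergy S p fun x => dyadicSlice k |u x|) := by
        gcongr _ * ?_
        refine (superlevel_le_tsum_dyadicSlice p u k).trans (hK _ finite.toFinset fun x hx => ?_)
        exact dyadicSlice_of_le <| not_lt.1 fun h =>
          hx (finite.mem_toFinset.2 (two_zpow_lt_enorm_iff.2 h))
    _ = K * (a ^ q * finite.toFinset.card) ^ (p / D) *
          dirichletEnergy S p fun x => dyadicSlice k |u x| := by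
        rw [ENNReal.mul_rpow_of_nonneg _ _ (div_pos hp hD).le]
        ring
    _ ≤ K * (∑' x, ‖u x‖ₑ ^ q) ^ (p / D) *
          dirichletEnergy S p fun x => dyadicSlice k |u x| := by gcongr

lemma FaberKrahn.elpNorm_le (hK : FaberKrahn S D p K) (hp : 1 ≤ p) (hpD : p < D)
    (hpq : q⁻¹ = p⁻¹ - D⁻¹) (hu : ∑' x, ‖u x‖ₑ ^ q ≠ ∞) :
    elpNorm q (fun x => ‖u x‖ₑ) ≤ (4 ^ q * K * dirichletEnergy S p u) ^ (1 / p) := by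
  have hp0 : 0 < p := one_pos.trans_le hp
  have hq : 0 < q := sobolevExponent_pos hp0 hpD hpq
  set T := ∑' x, ‖u x‖ₑ ^ q with hT
  rcases eq_or_ne T 0 with h | hT₀
  · simp only [elpNorm, ← hT, h, ENNReal.zero_rpow_of_pos (one_div_pos.2 hq), zero_le]
  have self_bound : T ^ (1 - p / D) * T ^ (p / D) ≤
      4 ^ q * K * dirichletEnergy S p u * T ^ (p / D) := by
    calc T ^ (1 - p / D) * T ^ (p / D) = T := by
          rw [← ENNReal.rpow_add _ _ hT₀ hu, sub_add_cancel, ENNReal.rpow_one]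
      _ ≤ 4 ^ q * ∑' k : ℤ, ((2 : ℝ≥0∞) ^ k) ^ q * {x | 2 ^ (k + 1) < ‖u x‖ₑ}.encard :=
          tsum_rpow_le_tsum_superlevel hq fun x => enorm_ne_top
      _ ≤ 4 ^ q * ∑' k : ℤ, K * T ^ (p / D) * dirichletEnergy S p (dyadicSlice k |u ·|) := by
          gcongr _ * ?_
          refine ENNReal.tsum_le_tsum fun k => ?_
          exact hK.superlevel_le hp0 hpD hpq hu k
      _ ≤ 4 ^ q * (K * T ^ (p / D) * dirichletEnergy S p u) := by
          rw [ENNReal.tsum_mul_left]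
          gcongr
          exact tsum_dirichletEnergy_dyadicSlice_le S hp u
      _ = 4 ^ q * K * dirichletEnergy S p u * T ^ (p / D) := by ring
  have hD : D ≠ 0 := (hp0.trans hpD).ne'
  have exponents : 1 / q = (1 - p / D) * (1 / p) := by
    rw [one_div, hpq]
    field_simp
  rw [elpNorm, exponents, ENNReal.rpow_mul]
  gcongr
  exact (ENNReal.mul_le_mul_iff_left (ENNReal.rpow_pos (pos_iff_ne_zero.2 hT₀) hu).ne'
    (ENNReal.rpow_ne_top_of_ne_zero hT₀ hu)).1 self_bound

theorem exists_elpNorm_le_dirichletEnergy (hgen : Subgroup.closure (S : Set G) = ⊤)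
    (hsymm : ∀ s ∈ S, s⁻¹ ∈ S) {c : ℝ} (hc : 0 < c)
    (hball : ∀ n : ℕ, 1 ≤ n → c * (n : ℝ) ^ D ≤ (wordBall S n).ncard) (hp : 1 ≤ p)
    (hpD : p < D) (hpq : q⁻¹ = p⁻¹ - D⁻¹) :
    ∃ K : ℝ≥0, ∀ u : G → ℝ, ∑' x, ‖u x‖ₑ ^ q ≠ ∞ →
      elpNorm q (fun x => ‖u x‖ₑ) ≤ K * dirichletEnergy S p u ^ (1 / p) := by
  have hp0 : 0 < p := one_pos.trans_le hp
  obtain ⟨K, hK⟩ := exists_faberKrahn hgen hsymm hc (hp0.trans hpD) hball hp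
  refine ⟨(4 ^ q * K) ^ (1 / p), fun u hu => ?_⟩
  refine (hK.elpNorm_le hp hpD hpq hu).trans_eq ?_
  have hq : 0 < q := sobolevExponent_pos hp0 hpD hpq
  rw [ENNReal.mul_rpow_of_nonneg _ _ (one_div_nonneg.2 hp0.le),
    ENNReal.coe_rpow_of_nonneg (4 ^ q * K) (one_div_nonneg.2 hp0.le), ENNReal.coe_mul,
    ENNReal.coe_rpow_of_nonneg 4 hq.le, ENNReal.coe_ofNat]

end Sobolev

section RealNorms

variable {X : Type*} {u : X → ℝ} {p q s : ℝ}

lemma memlp_iff_tsum_enorm_ne_top (hq : 0 ≤ q) : Memlp q u ↔ ∑' x, ‖u x‖ₑ ^ q ≠ ∞ := by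
  simp only [Memlp, Real.enorm_eq_ofReal_abs, ENNReal.ofReal_rpow_of_nonneg (abs_nonneg _) hq]
  refine ⟨fun h => h.tsum_ofReal_ne_top, fun h => (ENNReal.summable_toReal h).congr fun x => ?_⟩
  exact ENNReal.toReal_ofReal (by positivity)

lemma ofReal_lpNorm (hq : 0 ≤ q) (hu : Memlp q u) :
    ENNReal.ofReal (lpNorm q u) = elpNorm q fun x => ‖u x‖ₑ := by
  simp only [elpNorm, Real.enorm_eq_ofReal_abs, ENNReal.ofReal_rpow_of_nonneg (abs_nonneg _) hq]
  rw [← ENNReal.ofReal_tsum_of_nonneg (fun x => by positivity) hu, lpNorm,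
    ENNReal.ofReal_rpow_of_nonneg (tsum_nonneg fun x => by positivity) (one_div_nonneg.2 hq)]

lemma lpNorm_nonneg (q : ℝ) (u : X → ℝ) : 0 ≤ lpNorm q u :=
  Real.rpow_nonneg (tsum_nonneg fun x => by positivity) _

lemma memlp_abs_rpow : Memlp q (fun x => |u x| ^ s) ↔ Memlp (s * q) u := by
  simp only [Memlp, abs_of_nonneg (Real.rpow_nonneg (abs_nonneg (u _)) _),
    ← Real.rpow_mul (abs_nonneg (u _))]

lemma lpNorm_abs_rpow (hs : s ≠ 0) (q : ℝ) (u : X → ℝ) :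
    lpNorm q (fun x => |u x| ^ s) = lpNorm (s * q) u ^ s := by
  simp only [lpNorm, abs_of_nonneg (Real.rpow_nonneg (abs_nonneg (u _)) _),
    ← Real.rpow_mul (abs_nonneg (u _))]
  rw [← Real.rpow_mul (tsum_nonneg fun x => by positivity), one_div_mul_eq_div,
    div_mul_cancel_left₀ hs, one_div]

lemma Memlp.mono (hu : Memlp p u) (hp : 0 < p) (hpq : p ≤ q) : Memlp q u := by
  have hq : 0 < q := hp.trans_le hpq
  rw [memlp_iff_tsum_enorm_ne_top hq.le, ← elpNorm_rpow hq.ne']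
  refine ENNReal.rpow_ne_top_of_nonneg hq.le (ne_top_of_le_ne_top ?_ (elpNorm_anti hp hpq _))
  exact ofReal_lpNorm hp.le hu ▸ ENNReal.ofReal_ne_top

lemma lpNorm_anti (hp : 0 < p) (hpq : p ≤ q) (hu : Memlp p u) : lpNorm q u ≤ lpNorm p u := by
  rw [← ENNReal.ofReal_le_ofReal_iff (lpNorm_nonneg p u), ofReal_lpNorm hp.le hu,
    ofReal_lpNorm (hp.trans_le hpq).le (hu.mono hp hpq)]
  exact elpNorm_anti hp hpq _

lemma ofReal_D12Norm [Group G] {S : Finset G} {u : G → ℝ} (hu : Summable (gradSq S u)) :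
    ENNReal.ofReal (D12Norm S u) = dirichletEnergy S 2 u ^ (1 / 2 : ℝ) := by
  have gradSq_nonneg (x : G) : 0 ≤ gradSq S u x := Finset.sum_nonneg fun s _ => sq_nonneg _
  have energy_eq (x : G) :
      ∑ s ∈ S, ‖u (x * s) - u x‖ₑ ^ (2 : ℝ) = ENNReal.ofReal (gradSq S u x) := by
    rw [gradSq, ENNReal.ofReal_sum_of_nonneg fun s _ => sq_nonneg _]
    refine Finset.sum_congr rfl fun s _ => ?_
    rw [Real.enorm_eq_ofReal_abs, ENNReal.rpow_two, ← ENNReal.ofReal_pow (abs_nonneg _), sq_abs]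
  rw [dirichletEnergy, tsum_congr energy_eq, ← ENNReal.ofReal_tsum_of_nonneg gradSq_nonneg hu,
    ENNReal.ofReal_rpow_of_nonneg (tsum_nonneg gradSq_nonneg) (by norm_num), D12Norm]

lemma D12Norm_nonneg [Group G] (S : Finset G) (u : G → ℝ) : 0 ≤ D12Norm S u :=
  Real.rpow_nonneg (tsum_nonneg fun _ => Finset.sum_nonneg fun _ _ => sq_nonneg _) _

lemma lpNorm_conv_le_of_elpNorm_le {R : X → X → ℝ} {f : X → ℝ} {r : ℝ} {K : ℝ≥0}
    (hp : 0 ≤ p) (hr : 0 < r)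
    (hK : elpNorm r (fun x => ∑' y, ‖R x y‖ₑ * ‖f y‖ₑ) ≤ K * elpNorm p fun y => ‖f y‖ₑ)
    (hf : Memlp p f) :
    (∀ x, Summable fun y => R x y * f y) ∧ Memlp r (conv R f) ∧
      lpNorm r (conv R f) ≤ K * lpNorm p f := by
  rw [← ofReal_lpNorm hp hf, ← ENNReal.ofReal_coe_nnreal, ← ENNReal.ofReal_mul K.coe_nonneg] at hK
  have row_summable (x : X) : Summable fun y => R x y * f y := by
    have : ∑' y, ‖R x y * f y‖ₑ ≠ ∞ := by
      simp only [enorm_mul]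
      exact ne_top_of_le_ne_top ENNReal.ofReal_ne_top ((le_elpNorm hr _ x).trans hK)
    exact Summable.of_enorm this
  have conv_le : elpNorm r (fun x => ‖conv R f x‖ₑ) ≤ ENNReal.ofReal (K * lpNorm p f) := by
    refine (elpNorm_mono hr.le fun x => ?_).trans hK
    simp only [← enorm_mul]
    exact enorm_tsum_le_tsum_enorm
  have conv_mem : Memlp r (conv R f) := by
    rw [memlp_iff_tsum_enorm_ne_top hr.le, ← elpNorm_rpow hr.ne']
    exact ENNReal.rpow_ne_top_of_nonneg hr.le (ne_top_of_le_ne_top ENNReal.ofReal_ne_top conv_le)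
  refine ⟨row_summable, conv_mem, ?_⟩
  rwa [← ENNReal.ofReal_le_ofReal_iff (mul_nonneg K.coe_nonneg (lpNorm_nonneg p f)),
    ofReal_lpNorm hr.le conv_mem]

end RealNorms

section PolynomialGrowth

variable [Group G] {S : Finset G} {N : ℕ}

lemma ncard_wordBall (S : Finset G) (n : ℕ) :
    (wordBall S n).ncard = Nat.card {x : G // wordDist S 1 x ≤ n} :=
  (Nat.card_coe_set_eq _).symm

lemma encard_wordBall_le {C : ℝ≥0} {n : ℕ} (hpos : 0 < (wordBall S n).ncard)
    (hle : ((wordBall S n).ncard : ℝ) ≤ C * (n : ℝ) ^ N) :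
    ((wordBall S n).encard : ℝ≥0∞) ≤ C * (n : ℝ≥0∞) ^ (N : ℝ) := by
  rw [← (Set.finite_of_ncard_pos hpos).cast_ncard_eq, ENat.toENNReal_coe, ENNReal.rpow_natCast,
    ← ENNReal.coe_natCast, ← ENNReal.coe_natCast n]
  exact_mod_cast hle

lemma exists_lpNorm_le_D12Norm (hgen : Subgroup.closure (S : Set G) = ⊤)
    (hsymm : ∀ s ∈ S, s⁻¹ ∈ S) (hN : 3 ≤ N) {c : ℝ} (hc : 0 < c)
    (hball : ∀ n : ℕ, 1 ≤ n → c * (n : ℝ) ^ N ≤ (wordBall S n).ncard)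
    {q : ℝ} (hq : 2 * (N : ℝ) / ((N : ℝ) - 2) ≤ q) :
    ∃ K : ℝ≥0, ∀ u : G → ℝ, MemD12 S N u → Memlp q u ∧ lpNorm q u ≤ K * D12Norm S u := by
  have hN2 : (2 : ℝ) < N := by exact_mod_cast hN
  have := sub_pos.2 hN2
  have critical_pos : 0 < 2 * (N : ℝ) / (N - 2) := by positivity
  obtain ⟨K, hK⟩ := exists_elpNorm_le_dirichletEnergy (S := S) (D := N) (p := 2)
    (q := 2 * (N : ℝ) / (N - 2)) hgen hsymm hc (by simpa only [Real.rpow_natCast] using hball)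
    one_le_two hN2 (by field_simp)
  refine ⟨K, fun u ⟨hu, hgrad⟩ => ⟨hu.mono critical_pos hq, ?_⟩⟩
  have sobolev := hK u ((memlp_iff_tsum_enorm_ne_top critical_pos.le).1 hu)
  rw [← ofReal_lpNorm critical_pos.le hu, ← ofReal_D12Norm hgrad, ← ENNReal.ofReal_coe_nnreal,
    ← ENNReal.ofReal_mul K.coe_nonneg,
    ENNReal.ofReal_le_ofReal_iff (mul_nonneg K.coe_nonneg (D12Norm_nonneg S u))] at sobolev
  exact (lpNorm_anti critical_pos hq hu).trans sobolev

lemma exists_lpNorm_conv_le (hgen : Subgroup.closure (S : Set G) = ⊤)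
    (hsymm : ∀ s ∈ S, s⁻¹ ∈ S) {c₁ c₂ : ℝ} (hc₁ : 0 < c₁)
    (hball : ∀ n : ℕ, 1 ≤ n → c₁ * (n : ℝ) ^ N ≤ (wordBall S n).ncard ∧
      ((wordBall S n).ncard : ℝ) ≤ c₂ * (n : ℝ) ^ N)
    {α : ℝ} (hα : 0 < α) (hαN : α < N) {R : G → G → ℝ} {c : ℝ}
    (hoff : ∀ x y, x ≠ y → |R x y| ≤ c * (wordDist S x y : ℝ) ^ (α - N))
    (hdiag : ∀ x, |R x x| ≤ c) {p r : ℝ} (hp : 1 < p) (hr : 0 < r) (hpr : r⁻¹ = p⁻¹ - α / N) :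
    ∃ K : ℝ≥0, ∀ f : G → ℝ, Memlp p f →
      (∀ x, Summable fun y => R x y * f y) ∧ Memlp r (conv R f) ∧
        lpNorm r (conv R f) ≤ K * lpNorm p f := by
  have ball_pos (n : ℕ) (hn : 1 ≤ n) : 0 < (wordBall S n).ncard := by
    have : (0 : ℝ) < c₁ * (n : ℝ) ^ N := by positivity
    exact_mod_cast this.trans_le (hball n hn).1
  lift c to ℝ≥0 using (abs_nonneg _).trans (hdiag 1)
  lift c₂ to ℝ≥0 using by simpa using (Nat.cast_nonneg _).trans (hball 1 le_rfl).2
  obtain ⟨K, hK⟩ := exists_elpNorm_tsum_kernel_mul_le hgen hsymm hα hαN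
    (fun n hn => encard_wordBall_le (ball_pos n hn) (hball n hn).2) hoff hdiag hp hr hpr
  exact ⟨K, fun f => lpNorm_conv_le_of_elpNorm_le (one_pos.trans hp).le hr (hK fun y => ‖f y‖ₑ)⟩

lemma sobolevExponent_le_mul {D α p : ℝ} (hD : 2 < D) (hα : 0 < α)
    (hp : (D + α) / (D - 2) ≤ p) : 2 * D / (D - 2) ≤ p * (2 * D / (D + α)) := by
  have : 0 < D - 2 := sub_pos.2 hD
  calc 2 * D / (D - 2) = (D + α) / (D - 2) * (2 * D / (D + α)) := by field_simp
    _ ≤ p * (2 * D / (D + α)) := by gcongr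

theorem sobolev_type_inequality_convolution_general (hgen : Subgroup.closure (S : Set G) = ⊤)
    (hsymm : ∀ s ∈ S, s⁻¹ ∈ S) (hN : 3 ≤ N) {C₁ C₂ : ℝ} (hC₁ : 0 < C₁)
    (hgrowth : ∀ n : ℕ, 1 ≤ n →
      C₁ * (n : ℝ) ^ N ≤ (Nat.card {x : G // wordDist S 1 x ≤ n} : ℝ) ∧
      (Nat.card {x : G // wordDist S 1 x ≤ n} : ℝ) ≤ C₂ * (n : ℝ) ^ N)
    {α : ℝ} (hα : 0 < α) (hαN : α < N) {R : G → G → ℝ} {c : ℝ}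
    (hoff : ∀ x y, x ≠ y → |R x y| ≤ c * (wordDist S x y : ℝ) ^ (α - N))
    (hdiag : ∀ x, |R x x| ≤ c) {p : ℝ} (hp : ((N : ℝ) + α) / ((N : ℝ) - 2) ≤ p) :
    ∃ C : ℝ, 0 < C ∧ ∀ u : G → ℝ, MemD12 S N u →
      (∀ x, Summable fun y => R x y * |u y| ^ p) ∧
      Memlp (2 * (N : ℝ) / ((N : ℝ) - α)) (conv R fun y => |u y| ^ p) ∧
      lpNorm (2 * (N : ℝ) / ((N : ℝ) - α)) (conv R fun y => |u y| ^ p) ≤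
        C * D12Norm S u ^ p := by
  have hN2 : (2 : ℝ) < N := by exact_mod_cast hN
  have := sub_pos.2 hN2
  have := sub_pos.2 hαN
  have hp0 : 0 < p := hp.trans_lt' (by positivity)
  simp only [← ncard_wordBall] at hgrowth
  obtain ⟨K₁, sobolev⟩ := exists_lpNorm_le_D12Norm hgen hsymm hN hC₁
    (fun n hn => (hgrowth n hn).1) (sobolevExponent_le_mul hN2 hα hp)
  obtain ⟨K₂, hardy_littlewood_sobolev⟩ := exists_lpNorm_conv_le (p := 2 * N / (N + α))
    (r := 2 * N / (N - α)) hgen hsymm hC₁ hgrowth hα hαN hoff hdiag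
    ((one_lt_div (by positivity)).2 (by linarith)) (by positivity) (by field_simp; ring)
  refine ⟨K₂ * K₁ ^ p + 1, by positivity, fun u hu => ?_⟩
  obtain ⟨u_mem, u_le⟩ := sobolev u hu
  obtain ⟨summable, conv_mem, conv_le⟩ := hardy_littlewood_sobolev _ (memlp_abs_rpow.2 u_mem)
  refine ⟨summable, conv_mem, conv_le.trans ?_⟩
  have := D12Norm_nonneg S u
  calc K₂ * lpNorm (2 * N / (N + α)) (fun y => |u y| ^ p)
      = K₂ * lpNorm (p * (2 * N / (N + α))) u ^ p := by rw [lpNorm_abs_rpow hp0.ne']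
    _ ≤ K₂ * (K₁ * D12Norm S u) ^ p := by
        gcongr
        exact lpNorm_nonneg _ u
    _ = K₂ * K₁ ^ p * D12Norm S u ^ p := by rw [Real.mul_rpow K₁.coe_nonneg this, mul_assoc]
    _ ≤ (K₂ * K₁ ^ p + 1) * D12Norm S u ^ p := by gcongr; exact le_add_of_nonneg_right zero_le_one

end PolynomialGrowth

theorem sobolev_type_inequality_convolution
    [Group G] [Countable G]
    (S : Finset G) (hS_gen : Subgroup.closure (S : Set G) = ⊤)
    (hS_sym : ∀ s ∈ S, s⁻¹ ∈ S) (hS_e : (1 : G) ∉ S)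
    (N : ℕ) (hN : 3 ≤ N)
    (C₁ C₂ : ℝ) (hC₁ : 0 < C₁) (hC₂ : 0 < C₂)
    (hgrowth : ∀ n : ℕ, 1 ≤ n →
      C₁ * (n : ℝ) ^ N ≤ (Nat.card {x : G // wordDist S 1 x ≤ n} : ℝ) ∧
      (Nat.card {x : G // wordDist S 1 x ≤ n} : ℝ) ≤ C₂ * (n : ℝ) ^ N)
    (α : ℝ) (hα : 0 < α) (hαN : α < N)
    (Rα : G → G → ℝ) (hR_nonneg : ∀ x y, 0 ≤ Rα x y)
    (hR_symm : ∀ x y, Rα x y = Rα y x)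
    (c₁ c₂ : ℝ) (hc₁ : 0 < c₁) (hc₂ : 0 < c₂)
    (hR_low : ∀ x y : G, x ≠ y → c₁ * (wordDist S x y : ℝ) ^ (α - (N : ℝ)) ≤ Rα x y)
    (hR_up : ∀ x y : G, x ≠ y → Rα x y ≤ c₂ * (wordDist S x y : ℝ) ^ (α - (N : ℝ)))
    (hR_diag : ∀ x : G, Rα x x ≤ c₂)
    (p : ℝ) (hp : ((N : ℝ) + α) / ((N : ℝ) - 2) ≤ p) :
    ∃ C : ℝ, 0 < C ∧ ∀ u : G → ℝ, MemD12 S N u →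
      lpNorm (2 * (N : ℝ) / ((N : ℝ) - α)) (conv Rα (fun y => |u y| ^ p)) ≤
        C * D12Norm S u ^ p := by
  obtain ⟨C, hC, bound⟩ := sobolev_type_inequality_convolution_general (R := Rα) (c := c₂)
    hS_gen hS_sym hN hC₁ hgrowth hα hαN (by simpa only [abs_of_nonneg (hR_nonneg _ _)] using hR_up)
    (by simpa only [abs_of_nonneg (hR_nonneg _ _)] using hR_diag) hp
  exact ⟨C, hC, fun u hu => (bound u hu).2.2⟩

end Choquard
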